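/- The octonions are an alternative algebra: for all octonions x and y, (x·x)·y = x·(x·y) and y·(x·x) = (y·x)·x. -/

import Mathlib

/-- The octonions, realized via the Cayley–Dickson construction as pairs of
real quaternions. -/
abbrev Octonion : Type := Quaternion ℝ × Quaternion ℝ

/-- Cayley–Dickson multiplication: `(a,b)·(c,d) = (a c − d̄ b, d a + b c̄)`. -/
noncomputable def octMul (x y : Octonion) : Octonion :=
  (x.1 * y.1 - star y.2 * x.2, y.2 * x.1 + x.2 * star y.1)

/-!
If every trace `a + ā` and every norm `ā a` of an associative ring `A` with involution is central,
then, for `x = (a, b)`, the square is `x · x = (a² - b̄ b, b (a + ā))`. Comparing `(x · x) · y` with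
`x · (x · y)` only requires moving the central elements `a + ā` and `b̄ b = b b̄` past the entries
of `y`. The right identity is the mirror image of the left one under the conjugation
`(a, b) ↦ (ā, -b)`, which reverses products.
-/

/-- The involution `star` is *central*: traces `a + ā` and norms `ā a` lie in the center. This is
the property of the quaternions that makes their Cayley–Dickson double alternative. -/
class HasCentralInvolution (A : Type*) [NonUnitalNonAssocSemiring A] [Star A] : Prop where
  add_star_mem_center (a : A) : a + star a ∈ Set.center A
  star_mul_self_mem_center (a : A) : star a * a ∈ Set.center A

namespace HasCentralInvolution

instance instQuaternionAlgebra {R : Type*} [CommRing R] (c₁ c₂ c₃ : R) :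
    HasCentralInvolution (QuaternionAlgebra R c₁ c₂ c₃) where
  add_star_mem_center a := by
    rw [a.self_add_star', ← QuaternionAlgebra.coe_algebraMap]
    exact Set.algebraMap_mem_center _
  star_mul_self_mem_center a := by
    rw [a.star_mul_eq_coe, ← QuaternionAlgebra.coe_algebraMap]
    exact Set.algebraMap_mem_center _

instance instQuaternion {R : Type*} [CommRing R] : HasCentralInvolution (Quaternion R) :=
  instQuaternionAlgebra (-1) 0 (-1)

theorem commute_add_star {A : Type*} [NonUnitalNonAssocSemiring A] [Star A]
    [HasCentralInvolution A] (a b : A) : Commute (a + star a) b :=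
  (add_star_mem_center a).comm b

theorem commute_star_mul_self {A : Type*} [NonUnitalNonAssocSemiring A] [Star A]
    [HasCentralInvolution A] (a b : A) : Commute (star a * a) b :=
  (star_mul_self_mem_center a).comm b

instance isStarNormal {A : Type*} [NonUnitalNonAssocRing A] [Star A] [HasCentralInvolution A]
    (a : A) : IsStarNormal a where
  star_comm_self := by
    simpa using (commute_add_star a a).sub_left (Commute.refl a)

end HasCentralInvolution

section CayleyDickson

variable {A : Type*}

/-- The Cayley–Dickson product on pairs of elements of a ring with involution, with the sign and
order conventions of `octMul`. It is a function rather than a `Mul` instance because `A × A` already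
carries the componentwise product. -/
def cayleyDicksonMul [NonUnitalNonAssocRing A] [Star A] (x y : A × A) : A × A :=
  (x.1 * y.1 - star y.2 * x.2, y.2 * x.1 + x.2 * star y.1)

/-- The conjugation `(a, b) ↦ (ā, -b)` of the Cayley–Dickson double, used to exchange left and right
multiplication. -/
def cayleyDicksonConj [Neg A] [Star A] (x : A × A) : A × A :=
  (star x.1, -x.2)

theorem cayleyDicksonConj_involutive [InvolutiveNeg A] [InvolutiveStar A] :
    Function.Involutive (cayleyDicksonConj (A := A)) := fun x => by
  simp [cayleyDicksonConj]

theorem cayleyDicksonConj_mul [NonUnitalNonAssocRing A] [StarRing A] (x y : A × A) :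
    cayleyDicksonConj (cayleyDicksonMul x y) =
      cayleyDicksonMul (cayleyDicksonConj y) (cayleyDicksonConj x) := by
  ext <;> simp [cayleyDicksonConj, cayleyDicksonMul, add_comm, sub_eq_add_neg]

theorem cayleyDicksonMul_self [NonUnitalNonAssocRing A] [Star A] (x : A × A) :
    cayleyDicksonMul x x = (x.1 * x.1 - star x.2 * x.2, x.2 * (x.1 + star x.1)) := by
  rw [cayleyDicksonMul, mul_add]

variable [NonUnitalRing A] [StarRing A] [HasCentralInvolution A]

open HasCentralInvolution

theorem cayleyDicksonMul_left_alternative (x y : A × A) :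
    cayleyDicksonMul (cayleyDicksonMul x x) y = cayleyDicksonMul x (cayleyDicksonMul x y) := by
  obtain ⟨a, b⟩ := x
  obtain ⟨c, d⟩ := y
  rw [cayleyDicksonMul_self]
  apply Prod.ext
  · calc (a * a - star b * b) * c - star d * (b * (a + star a))
        = a * a * c - star b * b * c - star d * b * (a + star a) := by
          rw [sub_mul, mul_assoc (star d)]
      _ = a * a * c - c * (star b * b) - (a + star a) * (star d * b) := by
          rw [commute_star_mul_self b c, commute_add_star a (star d * b)]
      _ = a * (a * c - star d * b) - (star a * star d + c * star b) * b := by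
          simp only [mul_sub, add_mul, mul_assoc]
          abel
      _ = a * (a * c - star d * b) - star (d * a + b * star c) * b := by
          simp only [star_add, star_mul, star_star]
  · calc d * (a * a - star b * b) + b * (a + star a) * star c
        = d * a * a - d * (star b * b) + b * ((a + star a) * star c) := by
          simp only [mul_sub, mul_assoc]
      _ = d * a * a - b * star b * d + b * (star c * (a + star a)) := by
          rw [← commute_star_mul_self b d, star_comm_self' b, commute_add_star a (star c)]
      _ = (d * a + b * star c) * a + b * (star c * star a - star b * d) := by
          simp only [mul_sub, mul_add, add_mul, mul_assoc]
          abel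
      _ = (d * a + b * star c) * a + b * star (a * c - star d * b) := by
          simp only [star_sub, star_mul, star_star]

theorem cayleyDicksonMul_right_alternative (x y : A × A) :
    cayleyDicksonMul y (cayleyDicksonMul x x) = cayleyDicksonMul (cayleyDicksonMul y x) x := by
  apply cayleyDicksonConj_involutive.injective
  simp only [cayleyDicksonConj_mul]
  exact cayleyDicksonMul_left_alternative (cayleyDicksonConj x) (cayleyDicksonConj y)

theorem octonion_alternative_general (x y : A × A) :
    cayleyDicksonMul (cayleyDicksonMul x x) y = cayleyDicksonMul x (cayleyDicksonMul x y) ∧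
    cayleyDicksonMul y (cayleyDicksonMul x x) = cayleyDicksonMul (cayleyDicksonMul y x) x :=
  ⟨cayleyDicksonMul_left_alternative x y, cayleyDicksonMul_right_alternative x y⟩

end CayleyDickson

/-- The octonions are an alternative algebra:
`(x·x)·y = x·(x·y)` and `y·(x·x) = (y·x)·x`. -/
theorem octonion_alternative (x y : Octonion) :
    octMul (octMul x x) y = octMul x (octMul x y) ∧
    octMul y (octMul x x) = octMul (octMul y x) x :=
  octonion_alternative_general x y
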